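/- (Theorem 3.3, indecomposability criterion) Set s_l := b_{2l−1} + b_{2l} for l = 1,…,r. The following are equivalent: (1) every endomorphism family (φ_1,…,φ_n) with φ_m² = φ_m for all m is trivial, i.e. either φ_m = 0 for all m or φ_m = identity for all m (equivalently, the module 𝕄(I,J) is indecomposable); (2) there exist indices 1 ≤ l₁ < l₂ ≤ r such that t ∤ s_{l₁}, t ∤ s_{l₂}, t divides s_l for every l with l₁ < l < l₂, and t ∤ s_{l₁} + s_{l₂}. -/

import Mathlib

open PowerSeries Matrix

noncomputable section

/-- `R` is the ring of formal power series `ℂ[[t]]`. -/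
abbrev R : Type := PowerSeries ℂ

/-- The variable `t` of `ℂ[[t]]`. -/
noncomputable def t : R := PowerSeries.X

/-- `2 × 2` matrices over `R = ℂ[[t]]`. -/
abbrev M2 : Type := Matrix (Fin 2) (Fin 2) R

/-- a statement about `t`-divisibility through the constant coefficient -/
theorem t_dvd_iff (f : R) : t ∣ f ↔ PowerSeries.constantCoeff f = 0 := by
  unfold t; exact PowerSeries.X_dvd_iff

theorem t_ne_zero : t ≠ 0 := by
  unfold t; exact PowerSeries.X_ne_zero

theorem cc_t : PowerSeries.constantCoeff t = 0 := by
  unfold t; simp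

theorem mat_cancel_right {A B G : M2} (hG : G.det ≠ 0) (h : A * G = B * G) : A = B := by
  have h1 : (A * G) * G.adjugate = (B * G) * G.adjugate := by rw [h]
  rw [Matrix.mul_assoc, Matrix.mul_assoc, Matrix.mul_adjugate, Matrix.mul_smul, Matrix.mul_smul,
    Matrix.mul_one, Matrix.mul_one] at h1
  refine Matrix.ext fun p q => ?_
  have := congrFun (congrFun h1 p) q
  simp only [Matrix.smul_apply, smul_eq_mul] at this
  exact mul_left_cancel₀ hG this

theorem smul_cancel {A B : M2} {σ : R} (hσ : σ ≠ 0) (h : σ • A = σ • B) : A = B := by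
  refine Matrix.ext fun p q => ?_
  have := congrFun (congrFun h p) q
  simp only [Matrix.smul_apply, smul_eq_mul] at this
  exact mul_left_cancel₀ hσ this

/-- Reduction of families of idempotents to a single idempotent at vertex `0`. -/
theorem core_reduction (n : ℕ) (hn : 0 < n) (x : ZMod n → M2) (G : ℕ → M2)
    (hG0 : G 0 = t • (1 : M2)) (hGn : G n = t • (1 : M2))
    (hdet : ∀ m, (G m).det ≠ 0)
    (hstep : ∀ m, m < n → ∃ σ : R, σ ≠ 0 ∧ x ((m + 1 : ℕ) : ZMod n) * G m = σ • G (m + 1)) :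
    (∀ φ : ZMod n → M2,
        (∀ m : ZMod n, x m * φ (m - 1) = φ m * x m) →
        (∀ m : ZMod n, φ m * φ m = φ m) →
        (∀ m : ZMod n, φ m = 0) ∨ (∀ m : ZMod n, φ m = 1)) ↔
    (∀ A : M2, A * A = A → (∀ m, m ≤ n → ∃ B : M2, B * G m = G m * A) → A = 0 ∨ A = 1) := by
  haveI : NeZero n := ⟨hn.ne'⟩
  constructor
  · intro H A hA hB
    have hB' : ∀ m, ∃ B : M2, m ≤ n → B * G m = G m * A := by
      intro m
      by_cases hm : m ≤ n
      · obtain ⟨B, h⟩ := hB m hm; exact ⟨B, fun _ => h⟩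
      · exact ⟨0, fun h => absurd h hm⟩
    choose Φ hΦ using hB'
    have hΦ0 : Φ 0 = A := by
      have := hΦ 0 (Nat.zero_le _)
      rw [hG0] at this
      simp only [Matrix.mul_smul, Matrix.mul_one, Matrix.smul_mul, Matrix.one_mul] at this
      exact smul_cancel t_ne_zero this
    have hΦn : Φ n = A := by
      have := hΦ n le_rfl
      rw [hGn] at this
      simp only [Matrix.mul_smul, Matrix.mul_one, Matrix.smul_mul, Matrix.one_mul] at this
      exact smul_cancel t_ne_zero this
    have key := H (fun z => Φ z.val) ?_ ?_
    · rcases key with h | h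
      · left; have := h 0; simpa [hΦ0] using this
      · right; have := h 0; simpa [hΦ0] using this
    · intro z
      have hz : z = (((z - 1).val + 1 : ℕ) : ZMod n) := by
        push_cast; rw [ZMod.natCast_zmod_val]; ring
      have hlt : (z - 1).val < n := ZMod.val_lt _
      show x z * Φ (z - 1).val = Φ z.val * x z
      generalize (z - 1).val = m at hz hlt
      have hv : Φ z.val = Φ (m + 1) := by
        rw [hz, ZMod.val_natCast]
        rcases Nat.lt_or_ge (m + 1) n with h | h
        · rw [Nat.mod_eq_of_lt h]
        · have : m + 1 = n := by omega
          rw [this, Nat.mod_self, hΦ0, hΦn]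
      rw [hv, hz]
      obtain ⟨σ, _, hs⟩ := hstep m hlt
      apply mat_cancel_right (hdet m)
      rw [Matrix.mul_assoc, Matrix.mul_assoc, hs, hΦ m hlt.le, ← Matrix.mul_assoc, hs,
        Matrix.mul_smul, Matrix.smul_mul, hΦ (m + 1) hlt]
    · intro z
      have hz := hΦ z.val (ZMod.val_lt z).le
      apply mat_cancel_right (hdet z.val)
      show Φ z.val * Φ z.val * G z.val = Φ z.val * G z.val
      rw [Matrix.mul_assoc, hz, ← Matrix.mul_assoc, hz, Matrix.mul_assoc, hA]
  · intro H φ hφ hid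
    have hrel : ∀ m, m ≤ n → φ (m : ZMod n) * G m = G m * φ 0 := by
      intro m
      induction m with
      | zero => intro _; rw [hG0]; simp
      | succ m ih =>
        intro hm
        have ih' := ih (by omega)
        obtain ⟨σ, hσ, hs⟩ := hstep m (by omega)
        have h1 := hφ ((m + 1 : ℕ) : ZMod n)
        have h2 : (((m + 1 : ℕ) : ZMod n) - 1) = (m : ZMod n) := by push_cast; ring
        rw [h2] at h1
        apply smul_cancel hσ
        rw [← Matrix.mul_smul, ← hs, ← Matrix.mul_assoc, ← h1, Matrix.mul_assoc, ih',
          ← Matrix.mul_assoc, hs, Matrix.smul_mul]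
    have hz : ∀ z : ZMod n, φ z * G z.val = G z.val * φ 0 := by
      intro z
      have := hrel z.val (ZMod.val_lt z).le
      rwa [ZMod.natCast_zmod_val] at this
    rcases H (φ 0) (hid 0) (fun m hm => ⟨_, hrel m hm⟩) with h | h
    · left; intro z
      apply mat_cancel_right (hdet z.val)
      rw [hz, h]; simp
    · right; intro z
      apply mat_cancel_right (hdet z.val)
      rw [hz, h]; simp

/-- The matrix criterion in terms of the constant coefficients of the partial sums. -/
theorem matrix_criterion (n r : ℕ) (G : ℕ → M2) (S : ℕ → R)
    (hout : ∀ m, m ≤ n → (∃ l, l ≤ r ∧ G m = !![t, S l; 0, t]) ∨ (∃ c, G m = !![t, c; 0, 1]))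
    (hall : ∀ l, l ≤ r → ∃ m, m ≤ n ∧ G m = !![t, S l; 0, t])
    (hin : ∃ m, m ≤ n ∧ ∃ c, G m = !![t, c; 0, 1]) :
    (∀ A : M2, A * A = A → (∀ m, m ≤ n → ∃ B : M2, B * G m = G m * A) → A = 0 ∨ A = 1) ↔
    ¬ ∃ a : ℂ, ∀ l, l ≤ r →
      PowerSeries.constantCoeff (S l) = 0 ∨ PowerSeries.constantCoeff (S l) = a := by
  constructor
  · rintro H ⟨a, ha⟩
    set u : R := PowerSeries.C a⁻¹ with hu
    have := H !![0, 0; t * u, 1] ?_ ?_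
    · rcases this with h | h
      · have := congrFun (congrFun h 1) 1
        simp at this
      · have := congrFun (congrFun h 0) 0
        simp at this
    · refine Matrix.ext fun p q => ?_; fin_cases p <;> fin_cases q <;> simp [Matrix.mul_apply, Fin.sum_univ_two]
    · intro m hm
      rcases hout m hm with ⟨l, hl, h⟩ | ⟨c, h⟩
      · have hd : t ∣ S l * (1 - S l * u) := by
          rw [t_dvd_iff]
          rcases ha l hl with h0 | h0
          · simp [h0]
          · by_cases ha0 : a = 0
            · simp [h0, ha0]
            · simp [h0, hu, ha0]
        obtain ⟨q', hq'⟩ := hd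
        refine ⟨!![S l * u, q'; t * u, 1 - S l * u], ?_⟩
        rw [h]
        refine Matrix.ext fun p q => ?_; fin_cases p <;> fin_cases q <;> simp [Matrix.mul_apply, Fin.sum_univ_two]
        · ring
        · linear_combination - hq'
        · ring
        · ring
      · refine ⟨!![c * u, c - c * (c * u); u, 1 - c * u], ?_⟩
        rw [h]
        refine Matrix.ext fun p q => ?_; fin_cases p <;> fin_cases q <;> simp [Matrix.mul_apply, Fin.sum_univ_two]
        · ring
        · ring
        · ring
        · ring
  · intro H A hA hB
    by_contra hne
    apply H
    obtain ⟨p, hp⟩ : ∃ p, p = A 0 0 := ⟨_, rfl⟩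
    obtain ⟨q, hq⟩ : ∃ q, q = A 0 1 := ⟨_, rfl⟩
    obtain ⟨w, hw⟩ : ∃ w, w = A 1 0 := ⟨_, rfl⟩
    obtain ⟨v, hv⟩ : ∃ v, v = A 1 1 := ⟨_, rfl⟩
    have e00 : p * p + q * w = p := by
      have := congrFun (congrFun hA 0) 0
      simpa [Matrix.mul_apply, Fin.sum_univ_two, ← hp, ← hq, ← hw, ← hv] using this
    have e01 : p * q + q * v = q := by
      have := congrFun (congrFun hA 0) 1
      simpa [Matrix.mul_apply, Fin.sum_univ_two, ← hp, ← hq, ← hw, ← hv] using this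
    have e10 : w * p + v * w = w := by
      have := congrFun (congrFun hA 1) 0
      simpa [Matrix.mul_apply, Fin.sum_univ_two, ← hp, ← hq, ← hw, ← hv] using this
    have e11 : w * q + v * v = v := by
      have := congrFun (congrFun hA 1) 1
      simpa [Matrix.mul_apply, Fin.sum_univ_two, ← hp, ← hq, ← hw, ← hv] using this
    obtain ⟨u, hu⟩ : ∃ u, w = t * u := by
      obtain ⟨m, hm, c, h⟩ := hin
      obtain ⟨B, hBm⟩ := hB m hm
      rw [h] at hBm
      have := congrFun (congrFun hBm 1) 0
      simp [Matrix.mul_apply, Fin.sum_univ_two, ← hw] at this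
      exact ⟨B 1 0, by rw [← this]; ring⟩
    have hD : PowerSeries.constantCoeff v - PowerSeries.constantCoeff p ≠ 0 := by
      intro hD
      have hpv : PowerSeries.constantCoeff v = PowerSeries.constantCoeff p := sub_eq_zero.mp hD
      have hpp : PowerSeries.constantCoeff p * PowerSeries.constantCoeff p
          = PowerSeries.constantCoeff p := by
        have := congrArg PowerSeries.constantCoeff e00
        simpa [hu, cc_t] using this
      have hp01 : PowerSeries.constantCoeff p = 0 ∨ PowerSeries.constantCoeff p = 1 := by
        have : PowerSeries.constantCoeff p * (PowerSeries.constantCoeff p - 1) = 0 := by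
          linear_combination hpp
        rcases mul_eq_zero.mp this with h | h
        · left; exact h
        · right; exact sub_eq_zero.mp h
      have hunit : 1 - p - v ≠ 0 := by
        intro h
        have := congrArg PowerSeries.constantCoeff h
        simp only [map_sub, map_one, map_zero, hpv] at this
        rcases hp01 with h | h <;> rw [h] at this <;> norm_num at this
      have q0 : q = 0 := by
        have : q * (1 - p - v) = 0 := by linear_combination -e01
        exact (mul_eq_zero.mp this).resolve_right hunit
      have w0 : w = 0 := by
        have : w * (1 - p - v) = 0 := by linear_combination -e10
        exact (mul_eq_zero.mp this).resolve_right hunit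
      have pp : p = 0 ∨ p = 1 := by
        have : p * (p - 1) = 0 := by rw [q0] at e00; linear_combination e00
        rcases mul_eq_zero.mp this with h | h
        · left; exact h
        · right; exact sub_eq_zero.mp h
      have vv : v = 0 ∨ v = 1 := by
        have : v * (v - 1) = 0 := by rw [q0] at e11; linear_combination e11
        rcases mul_eq_zero.mp this with h | h
        · left; exact h
        · right; exact sub_eq_zero.mp h
      apply hne
      rcases pp with h1 | h1 <;> rcases vv with h2 | h2
      · left; refine Matrix.ext fun p' q' => ?_; fin_cases p' <;> fin_cases q' <;>
          simp [← hp, ← hq, ← hw, ← hv, h1, h2, q0, w0]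
      · simp [h1, h2] at hpv
      · simp [h1, h2] at hpv
      · right; refine Matrix.ext fun p' q' => ?_; fin_cases p' <;> fin_cases q' <;>
          simp [← hp, ← hq, ← hw, ← hv, h1, h2, q0, w0]
    refine ⟨(PowerSeries.constantCoeff v - PowerSeries.constantCoeff p)
      / PowerSeries.constantCoeff u, ?_⟩
    intro l hl
    obtain ⟨m, hm, h⟩ := hall l hl
    obtain ⟨B, hBm⟩ := hB m hm
    rw [h] at hBm
    have f00 := congrFun (congrFun hBm 0) 0
    have f01 := congrFun (congrFun hBm 0) 1
    simp [Matrix.mul_apply, Fin.sum_univ_two, ← hp, ← hw, hu] at f00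
    simp [Matrix.mul_apply, Fin.sum_univ_two, ← hq, ← hv] at f01
    have g00 : B 0 0 = p + S l * u := by
      apply mul_left_cancel₀ t_ne_zero
      linear_combination f00
    rw [g00] at f01
    have g01 := congrArg PowerSeries.constantCoeff f01
    simp only [map_add, map_mul, cc_t] at g01
    by_cases hs : PowerSeries.constantCoeff (S l) = 0
    · left; exact hs
    · right
      have h3 : PowerSeries.constantCoeff (S l) * PowerSeries.constantCoeff u
          = PowerSeries.constantCoeff v - PowerSeries.constantCoeff p := by
        apply mul_left_cancel₀ hs
        linear_combination g01
      have hu0 : PowerSeries.constantCoeff u ≠ 0 := by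
        intro h0; rw [h0, mul_zero] at h3; exact hD h3.symm
      rw [eq_div_iff hu0]; exact h3

/-- The combinatorial equivalence (the sequence `s` is indexed from `1`). -/
theorem combinatorial (r : ℕ) (s : ℕ → ℂ) (S : ℕ → ℂ) (hS0 : S 0 = 0)
    (hS : ∀ l, S (l + 1) = S l + s (l + 1)) :
    (¬ ∃ a : ℂ, ∀ l, l ≤ r → S l = 0 ∨ S l = a) ↔
    (∃ l₁ l₂ : ℕ, 1 ≤ l₁ ∧ l₁ < l₂ ∧ l₂ ≤ r ∧ s l₁ ≠ 0 ∧ s l₂ ≠ 0 ∧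
      (∀ l, l₁ < l → l < l₂ → s l = 0) ∧ s l₁ + s l₂ ≠ 0) := by
  constructor
  · intro H
    by_contra hno
    apply H
    have key : ∀ l, l ≤ r → (∀ m, m ≤ l → S m = 0) ∨
        (∃ a l0, 1 ≤ l0 ∧ l0 ≤ l ∧ s l0 ≠ 0 ∧ (∀ m, l0 < m → m ≤ l → s m = 0) ∧
          (∀ m, m ≤ l → S m = 0 ∨ S m = a) ∧
          ((S l = a ∧ s l0 = a) ∨ (S l = 0 ∧ s l0 = -a))) := by
      intro l
      induction l with
      | zero =>
        intro _; left; intro m hm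
        obtain rfl : m = 0 := by omega
        exact hS0
      | succ l ih =>
        intro hl
        have hSl := hS l
        rcases ih (by omega) with h | ⟨a, l0, h1, h2, h3, h4, h5, h6⟩
        · by_cases hs : s (l + 1) = 0
          · left; intro m hm
            rcases Nat.lt_or_ge m (l + 1) with h' | h'
            · exact h m (by omega)
            · obtain rfl : m = l + 1 := by omega
              rw [hSl, h l le_rfl, hs, add_zero]
          · right
            refine ⟨s (l + 1), l + 1, by omega, le_rfl, hs, fun m _ _ => by omega, ?_, ?_⟩
            · intro m hm
              rcases Nat.lt_or_ge m (l + 1) with h' | h'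
              · left; exact h m (by omega)
              · obtain rfl : m = l + 1 := by omega
                right; rw [hSl, h l le_rfl, zero_add]
            · left; exact ⟨by rw [hSl, h l le_rfl, zero_add], rfl⟩
        · right
          by_cases hs : s (l + 1) = 0
          · have hSe : S (l + 1) = S l := by rw [hSl, hs, add_zero]
            refine ⟨a, l0, h1, by omega, h3, ?_, ?_, ?_⟩
            · intro m hm hm'
              rcases Nat.lt_or_ge m (l + 1) with h' | h'
              · exact h4 m hm (by omega)
              · obtain rfl : m = l + 1 := by omega
                exact hs
            · intro m hm
              rcases Nat.lt_or_ge m (l + 1) with h' | h'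
              · exact h5 m (by omega)
              · obtain rfl : m = l + 1 := by omega
                rw [hSe]; exact h5 l le_rfl
            · rw [hSe]; exact h6
          · have hsum : s l0 + s (l + 1) = 0 := by
              by_contra hne
              exact hno ⟨l0, l + 1, h1, by omega, hl, h3, hs,
                fun m hm hm' => h4 m hm (by omega), hne⟩
            have h6' : (S (l + 1) = a ∧ s (l + 1) = a) ∨ (S (l + 1) = 0 ∧ s (l + 1) = -a) := by
              rcases h6 with ⟨ha, hb⟩ | ⟨ha, hb⟩
              · right; constructor
                · rw [hSl]; linear_combination hsum + ha - hb
                · linear_combination hsum - hb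
              · left; constructor
                · rw [hSl]; linear_combination hsum + ha - hb
                · linear_combination hsum - hb
            refine ⟨a, l + 1, by omega, le_rfl, hs, fun m _ _ => by omega, ?_, h6'⟩
            intro m hm
            rcases Nat.lt_or_ge m (l + 1) with h' | h'
            · exact h5 m (by omega)
            · obtain rfl : m = l + 1 := by omega
              rcases h6' with h | h
              · right; exact h.1
              · left; exact h.1
    rcases key r le_rfl with h | ⟨a, _, _, _, _, _, h5, _⟩
    · exact ⟨0, fun l hl => Or.inl (h l hl)⟩
    · exact ⟨a, h5⟩
  · rintro ⟨l₁, l₂, h1, h12, h2, hs1, hs2, hbt, hsum⟩ ⟨a, ha⟩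
    obtain ⟨m₁, rfl⟩ : ∃ m, l₁ = m + 1 := ⟨l₁ - 1, by omega⟩
    obtain ⟨m₂, rfl⟩ : ∃ m, l₂ = m + 1 := ⟨l₂ - 1, by omega⟩
    have hconst : ∀ m, m₁ + 1 ≤ m → m ≤ m₂ → S m = S (m₁ + 1) := by
      intro m hm
      induction m, hm using Nat.le_induction with
      | base => intro _; rfl
      | succ m hm ih =>
        intro h
        rw [hS, hbt (m + 1) (by omega) (by omega), add_zero]
        exact ih (by omega)
    have c := hconst m₂ (by omega) le_rfl
    have e1 := hS m₁
    have e2 := hS m₂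
    have a1 := ha m₁ (by omega)
    have a2 := ha (m₁ + 1) (by omega)
    have a3 := ha (m₂ + 1) h2
    have d1 : S m₁ ≠ S (m₁ + 1) := by
      intro h; apply hs1; linear_combination e1.symm.trans h.symm
    have d2 : S (m₁ + 1) ≠ S (m₂ + 1) := by
      intro h; apply hs2; rw [← c] at h; linear_combination e2.symm.trans h.symm
    have d3 : S m₁ ≠ S (m₂ + 1) := by
      intro h; apply hsum; linear_combination (-h) - e1 - e2 - c
    rcases a1 with a1 | a1 <;> rcases a2 with a2 | a2 <;> rcases a3 with a3 | a3 <;>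
      rw [a1] at d1 d3 <;> rw [a2] at d1 d2 <;> rw [a3] at d2 d3 <;> simp_all

/-- The sum of the `b`'s encountered up to position `m`. -/
def cfun (r : ℕ) (i j : ℕ → ℕ) (b : ℕ → R) (m : ℕ) : R :=
  ∑ l ∈ Finset.range r,
    ((if i l ≤ m then b (2 * l + 1) else 0) + (if j l ≤ m then b (2 * l + 2) else 0))

/-- Partial sums of the `s_l`. -/
def Sfun (b : ℕ → R) (l : ℕ) : R := ∑ q ∈ Finset.range l, (b (2 * q + 1) + b (2 * q + 2))

/-- Position `m` lies inside some interval `[i_l, j_l)`. -/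
def Inside (r : ℕ) (i j : ℕ → ℕ) (m : ℕ) : Prop := ∃ l, l < r ∧ i l ≤ m ∧ m < j l

open Classical in
/-- The gauge matrices. -/
def Gfun (r : ℕ) (i j : ℕ → ℕ) (b : ℕ → R) (m : ℕ) : M2 :=
  if Inside r i j m then !![t, cfun r i j b m; 0, 1] else !![t, cfun r i j b m; 0, t]

theorem cfun_same (r : ℕ) (i j : ℕ → ℕ) (b : ℕ → R) (m : ℕ)
    (h : ∀ l, l < r → m + 1 ≠ i l ∧ m + 1 ≠ j l) :
    cfun r i j b (m + 1) = cfun r i j b m := by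
  unfold cfun
  apply Finset.sum_congr rfl
  intro l hl
  have h1 := h l (Finset.mem_range.mp hl)
  have e1 : i l ≤ m + 1 ↔ i l ≤ m := by omega
  have e2 : j l ≤ m + 1 ↔ j l ≤ m := by omega
  simp only [e1, e2]

theorem inside_same (r : ℕ) (i j : ℕ → ℕ) (m : ℕ)
    (h : ∀ l, l < r → m + 1 ≠ i l ∧ m + 1 ≠ j l) :
    Inside r i j (m + 1) ↔ Inside r i j m := by
  unfold Inside
  constructor
  · rintro ⟨l, hl, h1, h2⟩
    have := h l hl
    exact ⟨l, hl, by omega, by omega⟩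
  · rintro ⟨l, hl, h1, h2⟩
    have := h l hl
    exact ⟨l, hl, by omega, by omega⟩

theorem cfun_i (r : ℕ) (i j : ℕ → ℕ) (b : ℕ → R) (m l0 : ℕ) (hl0 : l0 < r)
    (hij : ∀ l, l < r → i l < j l) (hlt : ∀ l l', l < l' → l' < r → j l < i l')
    (h : m + 1 = i l0) :
    cfun r i j b (m + 1) = cfun r i j b m + b (2 * l0 + 1) := by
  have e : ∀ l ∈ Finset.range r,
      ((if i l ≤ m + 1 then b (2 * l + 1) else 0) + (if j l ≤ m + 1 then b (2 * l + 2) else 0))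
      = ((if i l ≤ m then b (2 * l + 1) else 0) + (if j l ≤ m then b (2 * l + 2) else 0))
        + (if l = l0 then b (2 * l0 + 1) else 0) := by
    intro l hl
    have hl' := Finset.mem_range.mp hl
    have h1 := hij l hl'
    have h0 := hij l0 hl0
    rcases lt_trichotomy l l0 with hc | hc | hc
    · have := hlt l l0 hc hl0
      rw [if_pos (by omega), if_pos (by omega), if_pos (by omega), if_pos (by omega),
        if_neg (by omega)]; simp
    · subst hc
      rw [if_pos (by omega), if_neg (by omega), if_neg (by omega), if_neg (by omega),
        if_pos rfl]; simp
    · have := hlt l0 l hc hl'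
      rw [if_neg (by omega), if_neg (by omega), if_neg (by omega), if_neg (by omega),
        if_neg (by omega)]; simp
  unfold cfun
  rw [Finset.sum_congr rfl e, Finset.sum_add_distrib, Finset.sum_ite_eq',
    if_pos (Finset.mem_range.mpr hl0)]

theorem cfun_j (r : ℕ) (i j : ℕ → ℕ) (b : ℕ → R) (m l0 : ℕ) (hl0 : l0 < r)
    (hij : ∀ l, l < r → i l < j l) (hlt : ∀ l l', l < l' → l' < r → j l < i l')
    (h : m + 1 = j l0) :
    cfun r i j b (m + 1) = cfun r i j b m + b (2 * l0 + 2) := by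
  have e : ∀ l ∈ Finset.range r,
      ((if i l ≤ m + 1 then b (2 * l + 1) else 0) + (if j l ≤ m + 1 then b (2 * l + 2) else 0))
      = ((if i l ≤ m then b (2 * l + 1) else 0) + (if j l ≤ m then b (2 * l + 2) else 0))
        + (if l = l0 then b (2 * l0 + 2) else 0) := by
    intro l hl
    have hl' := Finset.mem_range.mp hl
    have h1 := hij l hl'
    have h0 := hij l0 hl0
    rcases lt_trichotomy l l0 with hc | hc | hc
    · have := hlt l l0 hc hl0
      rw [if_pos (by omega), if_pos (by omega), if_pos (by omega), if_pos (by omega),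
        if_neg (by omega)]; simp
    · subst hc
      rw [if_pos (by omega), if_pos (by omega), if_pos (by omega), if_neg (by omega),
        if_pos rfl]; simp
    · have := hlt l0 l hc hl'
      rw [if_neg (by omega), if_neg (by omega), if_neg (by omega), if_neg (by omega),
        if_neg (by omega)]; simp
  unfold cfun
  rw [Finset.sum_congr rfl e, Finset.sum_add_distrib, Finset.sum_ite_eq',
    if_pos (Finset.mem_range.mpr hl0)]

theorem cfun_eq_Sfun (r : ℕ) (i j : ℕ → ℕ) (b : ℕ → R) (m l : ℕ) (hl : l ≤ r)
    (h : ∀ q, q < r → (i q ≤ m ↔ q < l) ∧ (j q ≤ m ↔ q < l)) :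
    cfun r i j b m = Sfun b l := by
  unfold cfun Sfun
  symm
  rw [← Finset.sum_subset (Finset.range_subset_range.mpr hl)]
  · apply Finset.sum_congr rfl
    intro q hq
    have hq' := Finset.mem_range.mp hq
    have := h q (by omega)
    rw [if_pos (this.1.mpr hq'), if_pos (this.2.mpr hq')]
  · intro q hq hq'
    have hq1 := Finset.mem_range.mp hq
    have := h q hq1
    rw [Finset.mem_range] at hq'
    rw [if_neg (fun h => hq' (this.1.mp h)), if_neg (fun h => hq' (this.2.mp h)), add_zero]

theorem Gfun_det (r : ℕ) (i j : ℕ → ℕ) (b : ℕ → R) (m : ℕ) : (Gfun r i j b m).det ≠ 0 := by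
  unfold Gfun
  split_ifs
  · simp [Matrix.det_fin_two, t_ne_zero]
  · simp [Matrix.det_fin_two, t_ne_zero]

/-- (Theorem 3.3, indecomposability criterion.)  With `s_l := b_{2l−1} + b_{2l}`
(`1`-indexed, `l = 1,…,r`), the module `𝕄(I,J)` is indecomposable — i.e. every
idempotent endomorphism family `(φ_1,…,φ_n)` is `0` everywhere or the identity
everywhere — if and only if there exist `1 ≤ l₁ < l₂ ≤ r` with `t ∤ s_{l₁}`,
`t ∤ s_{l₂}`, `t ∣ s_l` for every `l₁ < l < l₂`, and `t ∤ s_{l₁} + s_{l₂}`.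
Here `i, j : ℕ → ℕ` are `0`-indexed, so `i l, j l` for `l < r` are the paper's
`i_{l+1}, j_{l+1}`, and `b (2*l+1), b (2*l+2)` are the paper's `b_{2(l+1)-1}, b_{2(l+1)}`. -/
theorem stmt4
    (n k r : ℕ) (hn : 6 ≤ n) (hr2 : 2 ≤ r) (hrk : r ≤ k) (hkrn : k + r ≤ n)
    (i j : ℕ → ℕ)
    (hi1 : 1 ≤ i 0) (hjr : j (r - 1) ≤ n)
    (hij : ∀ l, l < r → i l < j l)
    (hji : ∀ l, l + 1 < r → j l < i (l + 1))
    (P : Finset ℕ) (hP : P ⊆ Finset.Icc 1 n)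
    (hPcard : P.card = k - r)
    (hPdisj : ∀ l, l < r → i l ∉ P ∧ j l ∉ P)
    (b : ℕ → R) (hb : ∑ m ∈ Finset.Icc 1 (2 * r), b m = 0)
    (x : ZMod n → M2)
    (hxI : ∀ l, l < r → x ((i l : ZMod n)) = !![t, b (2 * l + 1); 0, 1])
    (hxJ : ∀ l, l < r → x ((j l : ZMod n)) = !![1, b (2 * l + 2); 0, t])
    (hxP : ∀ m ∈ P, x ((m : ZMod n)) = 1)
    (hxO : ∀ m ∈ Finset.Icc 1 n, m ∉ P → (∀ l, l < r → m ≠ i l ∧ m ≠ j l) →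
      x ((m : ZMod n)) = t • (1 : M2)) :
    (∀ φ : ZMod n → M2,
        (∀ m : ZMod n, x m * φ (m - 1) = φ m * x m) →
        (∀ m : ZMod n, φ m * φ m = φ m) →
        (∀ m : ZMod n, φ m = 0) ∨ (∀ m : ZMod n, φ m = 1)) ↔
    (∃ l₁ l₂ : ℕ, 1 ≤ l₁ ∧ l₁ < l₂ ∧ l₂ ≤ r ∧
      ¬ t ∣ (b (2 * l₁ - 1) + b (2 * l₁)) ∧
      ¬ t ∣ (b (2 * l₂ - 1) + b (2 * l₂)) ∧
      (∀ l, l₁ < l → l < l₂ → t ∣ (b (2 * l - 1) + b (2 * l))) ∧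
      ¬ t ∣ (b (2 * l₁ - 1) + b (2 * l₁) + (b (2 * l₂ - 1) + b (2 * l₂)))) := by
  have hlt : ∀ l l', l < l' → l' < r → j l < i l' := by
    intro l l' h
    induction l', h using Nat.le_induction with
    | base => intro h; exact hji l h
    | succ l' h ih =>
      intro hr
      have h1 := ih (by omega)
      have h2 := hij l' (by omega)
      have h3 := hji l' hr
      omega
  have hipos : ∀ l, l < r → 1 ≤ i l := by
    intro l hl
    rcases Nat.eq_zero_or_pos l with rfl | h
    · exact hi1
    · have := hlt 0 l h hl; omega
  have hjn : ∀ l, l < r → j l ≤ n := by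
    intro l hl
    rcases Nat.lt_or_ge l (r - 1) with h | h
    · have h1 := hlt l (r - 1) h (by omega)
      have h2 := hij (r - 1) (by omega)
      omega
    · obtain rfl : l = r - 1 := by omega
      exact hjr
  have hout_l : ∀ m l, l ≤ r → (∀ q, q < r → (i q ≤ m ↔ q < l) ∧ (j q ≤ m ↔ q < l)) →
      Gfun r i j b m = !![t, Sfun b l; 0, t] := by
    intro m l hl h
    unfold Gfun
    rw [if_neg, cfun_eq_Sfun r i j b m l hl h]
    rintro ⟨q, hq, h1, h2⟩
    have := h q hq
    have h3 := this.2.mpr (this.1.mp h1)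
    omega
  have hSr : Sfun b r = 0 := by
    rw [← hb]
    have : ∀ r, Sfun b r = ∑ m ∈ Finset.Icc 1 (2 * r), b m := by
      intro r
      induction r with
      | zero => simp [Sfun]
      | succ r ih =>
        have e : 2 * (r + 1) = 2 * r + 1 + 1 := by ring
        rw [e, Finset.sum_Icc_succ_top (by omega), Finset.sum_Icc_succ_top (by omega), ← ih]
        unfold Sfun
        rw [Finset.sum_range_succ]; ring
    exact this r
  have hscal : (!![t, 0; 0, t] : M2) = t • (1 : M2) := by
    refine Matrix.ext fun p q => ?_; fin_cases p <;> fin_cases q <;> simp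
  have hG0 : Gfun r i j b 0 = t • (1 : M2) := by
    rw [hout_l 0 0 (by omega), ← hscal]
    · simp [Sfun]
    · intro q hq
      have := hipos q hq
      have := hij q hq
      omega
  have hGn : Gfun r i j b n = t • (1 : M2) := by
    rw [hout_l n r le_rfl, ← hscal, hSr]
    intro q hq
    have := hjn q hq
    have := hij q hq
    omega
  have hstep : ∀ m, m < n → ∃ σ : R, σ ≠ 0 ∧
      x ((m + 1 : ℕ) : ZMod n) * Gfun r i j b m = σ • Gfun r i j b (m + 1) := by
    intro m hm
    by_cases hsp : ∀ l, l < r → m + 1 ≠ i l ∧ m + 1 ≠ j l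
    · have hGe : Gfun r i j b (m + 1) = Gfun r i j b m := by
        unfold Gfun
        rw [cfun_same r i j b m hsp]
        by_cases h : Inside r i j m
        · rw [if_pos h, if_pos ((inside_same r i j m hsp).mpr h)]
        · rw [if_neg h, if_neg (fun h' => h ((inside_same r i j m hsp).mp h'))]
      by_cases hmP : m + 1 ∈ P
      · exact ⟨1, one_ne_zero, by rw [hxP _ hmP, hGe, one_smul, Matrix.one_mul]⟩
      · refine ⟨t, t_ne_zero, ?_⟩
        rw [hxO (m + 1) (Finset.mem_Icc.mpr ⟨by omega, by omega⟩) hmP hsp, hGe,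
          Matrix.smul_mul, Matrix.one_mul]
    · push Not at hsp
      obtain ⟨l, hl, h⟩ := hsp
      by_cases hi : m + 1 = i l
      · refine ⟨t, t_ne_zero, ?_⟩
        have n1 : ¬ Inside r i j m := by
          rintro ⟨q, hq, h1, h2⟩
          rcases lt_trichotomy q l with hc | hc | hc
          · have := hlt q l hc hl; omega
          · subst hc; omega
          · have := hlt l q hc hq; have := hij l hl; omega
        have n2 : Inside r i j (m + 1) := ⟨l, hl, by omega, by have := hij l hl; omega⟩
        have hx := hxI l hl
        rw [← hi] at hx
        unfold Gfun
        rw [if_neg n1, if_pos n2, hx, cfun_i r i j b m l hl hij hlt hi]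
        refine Matrix.ext fun p q => ?_; fin_cases p <;> fin_cases q <;> simp [Matrix.mul_apply, Fin.sum_univ_two]
        ring
      · have hj := h hi
        refine ⟨1, one_ne_zero, ?_⟩
        have n1 : Inside r i j m := ⟨l, hl, by have := hij l hl; omega, by omega⟩
        have n2 : ¬ Inside r i j (m + 1) := by
          rintro ⟨q, hq, h1, h2⟩
          rcases lt_trichotomy q l with hc | hc | hc
          · have := hlt q l hc hl; have := hij l hl; omega
          · subst hc; omega
          · have := hlt l q hc hq; omega
        have hx := hxJ l hl
        rw [← hj] at hx
        unfold Gfun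
        rw [if_pos n1, if_neg n2, hx, cfun_j r i j b m l hl hij hlt hj]
        refine Matrix.ext fun p q => ?_; fin_cases p <;> fin_cases q <;> simp [Matrix.mul_apply, Fin.sum_univ_two]
  rw [core_reduction n (by omega) x (Gfun r i j b) hG0 hGn (Gfun_det r i j b) hstep]
  rw [matrix_criterion n r (Gfun r i j b) (Sfun b) ?_ ?_ ?_]
  · rw [combinatorial r
      (fun l => PowerSeries.constantCoeff (b (2 * l - 1) + b (2 * l)))
      (fun l => PowerSeries.constantCoeff (Sfun b l)) (by simp [Sfun]) ?_]
    · simp only [t_dvd_iff, map_add, ne_eq]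
    · intro l
      show PowerSeries.constantCoeff (Sfun b (l + 1)) = _
      unfold Sfun
      rw [Finset.sum_range_succ, map_add]
      rfl
  · intro m hm
    by_cases h : Inside r i j m
    · right; exact ⟨_, by unfold Gfun; rw [if_pos h]⟩
    · left
      have hex : ∃ l, l = r ∨ m < j l := ⟨r, Or.inl rfl⟩
      classical
      have hle : Nat.find hex ≤ r := Nat.find_min' hex (Or.inl rfl)
      have hspec := Nat.find_spec hex
      have hmin : ∀ q, q < Nat.find hex → ¬ (q = r ∨ m < j q) := fun q hq => Nat.find_min hex hq
      generalize Nat.find hex = l at hle hspec hmin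
      refine ⟨l, hle, hout_l m l hle ?_⟩
      intro q hq
      have hq1 := hij q hq
      have hnot : i q ≤ m → j q ≤ m := by
        intro h1; by_contra h2; exact h ⟨q, hq, h1, by omega⟩
      rcases Nat.lt_or_ge q l with hc | hc
      · have := hmin q hc
        omega
      · rcases hspec with h1 | h1
        · omega
        · rcases Nat.eq_or_lt_of_le hc with h2 | h2
          · subst h2; omega
          · have := hlt l q h2 hq
            omega
  · intro l hl
    rcases Nat.eq_zero_or_pos l with rfl | h
    · refine ⟨0, by omega, hout_l 0 0 hl ?_⟩
      intro q hq
      have := hipos q hq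
      have := hij q hq
      omega
    · refine ⟨j (l - 1), hjn _ (by omega), hout_l _ l hl ?_⟩
      intro q hq
      have := hij q hq
      have := hij (l - 1) (by omega)
      rcases lt_trichotomy q (l - 1) with hc | hc | hc
      · have := hlt q (l - 1) hc (by omega); omega
      · subst hc; omega
      · have := hlt (l - 1) q hc hq; omega
  · refine ⟨i 0, ?_, cfun r i j b (i 0), ?_⟩
    · have := hij 0 (by omega); have := hjn 0 (by omega); omega
    · unfold Gfun
      rw [if_pos ⟨0, by omega, le_rfl, hij 0 (by omega)⟩]

end
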